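/- In S²_BΛ²ℝ⁴ one has Q(Id) = 3·Id, and if R ∈ S²_BΛ²ℝ⁴ is Einstein with ρ(R) = 3·id_{ℝ⁴} (so scal(R) = 12), then for every κ ∈ ℝ, Q(R − κ·Id) = Q(R) − 6κ·Id + 3κ²·Id. -/

import Mathlib

noncomputable section

open scoped ComplexConjugate

/-- `ℝ⁴` with its standard basis. -/
abbrev V4 := Fin 4 → ℝ
/-- `Λ²ℝ⁴` in the coordinates given by the basis
`e₁∧e₂, e₁∧e₃, e₁∧e₄, e₂∧e₃, e₂∧e₄, e₃∧e₄` (0-indexed). -/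
abbrev L6 := Fin 6 → ℝ
/-- Endomorphisms of `Λ²ℝ⁴`, as `6×6` matrices. -/
abbrev M6 := Fin 6 → Fin 6 → ℝ

/-- standard basis of ℝ⁴ -/
def std4 (i : Fin 4) : V4 := fun j => if j = i then 1 else 0

/-- the standard inner product of ℝ⁴ -/
def ip4 (x y : V4) : ℝ := ∑ i, x i * y i

/-- the index pairs for the basis of Λ²ℝ⁴ -/
def pr : Fin 6 → Fin 4 × Fin 4 := ![(0,1),(0,2),(0,3),(1,2),(1,3),(2,3)]

/-- the wedge product `x ∧ y` of two vectors, in coordinates.  With this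
coordinate expression, the standard inner product `ip6` below satisfies
`⟨x∧y, z∧t⟩ = ⟨x,z⟩⟨y,t⟩ − ⟨x,t⟩⟨y,z⟩`. -/
def wedge (x y : V4) : L6 := fun k => x (pr k).1 * y (pr k).2 - x (pr k).2 * y (pr k).1

/-- the inner product of Λ²ℝ⁴ -/
def ip6 (a b : L6) : ℝ := ∑ k, a k * b k

/-- The Hodge star operator on Λ²ℝ⁴. -/
def hodge (w : L6) : L6 := ![w 5, -(w 4), w 3, w 2, -(w 1), w 0]

/-- self-dual 2-forms (the +1 eigenspace Λ²₊ of the Hodge star) -/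
def SelfDual (w : L6) : Prop := hodge w = w
/-- anti-self-dual 2-forms (the −1 eigenspace Λ²₋ of the Hodge star) -/
def AntiSelfDual (w : L6) : Prop := hodge w = -w

/-- application of an endomorphism (matrix) of Λ²ℝ⁴ to a 2-form -/
def appM (A : M6) (w : L6) : L6 := fun k => ∑ l, A k l * w l

/-- symmetry of an endomorphism of Λ²ℝ⁴ w.r.t. the inner product -/
def IsSymm6 (A : M6) : Prop := ∀ a b : L6, ip6 (appM A a) b = ip6 a (appM A b)

/-- the first Bianchi identity -/
def Bianchi (A : M6) : Prop := ∀ x y z t : V4,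
  ip6 (appM A (wedge x y)) (wedge z t) + ip6 (appM A (wedge z x)) (wedge y t)
    + ip6 (appM A (wedge y z)) (wedge x t) = 0

/-- algebraic curvature operators on ℝ⁴ : symmetric endomorphisms of Λ²ℝ⁴
satisfying the first Bianchi identity.  The set of these is `S²_BΛ²ℝ⁴`. -/
def IsCurvOp (A : M6) : Prop := IsSymm6 A ∧ Bianchi A

/-- the scalar curvature: twice the trace -/
def scal (A : M6) : ℝ := 2 * ∑ k, A k k

/-- orthogonal projection P₊ of Λ²ℝ⁴ onto Λ²₊ -/
def pplus (w : L6) : L6 := (1/2 : ℝ) • (w + hodge w)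

/-- the self-dual Weyl part W₊ of a curvature operator, as a map on Λ²₊:
`W₊η = P₊(Rη) − (scal(R)/12)·η`. -/
def Wplus (A : M6) (η : L6) : L6 := pplus (appM A η) - (scal A / 12) • η

/-- `R` is PIC₊ : the quadratic form `η ↦ ⟨Rη,η⟩` on Λ²₊ is 2-positive. -/
def PICp (A : M6) : Prop := ∀ η ζ : L6, SelfDual η → SelfDual ζ →
  ip6 η η = 1 → ip6 ζ ζ = 1 → ip6 η ζ = 0 →
  0 < ip6 (appM A η) η + ip6 (appM A ζ) ζ

/-- `R` is NNIC₊ : the quadratic form `η ↦ ⟨Rη,η⟩` on Λ²₊ is 2-nonnegative. -/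
def NNICp (A : M6) : Prop := ∀ η ζ : L6, SelfDual η → SelfDual ζ →
  ip6 η η = 1 → ip6 ζ ζ = 1 → ip6 η ζ = 0 →
  0 ≤ ip6 (appM A η) η + ip6 (appM A ζ) ζ

/-- `R` is PIC₋ : the quadratic form `η ↦ ⟨Rη,η⟩` on Λ²₋ is 2-positive. -/
def PICm (A : M6) : Prop := ∀ η ζ : L6, AntiSelfDual η → AntiSelfDual ζ →
  ip6 η η = 1 → ip6 ζ ζ = 1 → ip6 η ζ = 0 →
  0 < ip6 (appM A η) η + ip6 (appM A ζ) ζ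

/-- `R` is NNIC₋ : the quadratic form `η ↦ ⟨Rη,η⟩` on Λ²₋ is 2-nonnegative. -/
def NNICm (A : M6) : Prop := ∀ η ζ : L6, AntiSelfDual η → AntiSelfDual ζ →
  ip6 η η = 1 → ip6 ζ ζ = 1 → ip6 η ζ = 0 →
  0 ≤ ip6 (appM A η) η + ip6 (appM A ζ) ζ

/- ### complexifications -/

/-- `ℂ⁴` -/
abbrev VC4 := Fin 4 → ℂ
/-- `Λ²ℂ⁴` -/
abbrev LC6 := Fin 6 → ℂ

/-- the wedge product on ℂ⁴ -/
def wedgeC (x y : VC4) : LC6 := fun k => x (pr k).1 * y (pr k).2 - x (pr k).2 * y (pr k).1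

/-- the complex-bilinear extension of the inner product of ℝ⁴ -/
def bilC4 (x y : VC4) : ℂ := ∑ i, x i * y i

/-- the complex-bilinear extension of the inner product of Λ²ℝ⁴ -/
def bilC6 (a b : LC6) : ℂ := ∑ k, a k * b k

/-- the Hermitian inner product `⟨·,·⟩_h` on Λ²ℂ⁴ associated to the real inner
product on Λ²ℝ⁴ -/
def hermC6 (a b : LC6) : ℂ := ∑ k, a k * conj (b k)

/-- the complex-linear extension of an endomorphism of Λ²ℝ⁴ to Λ²ℂ⁴ -/
def appMC (A : M6) (w : LC6) : LC6 := fun k => ∑ l, (A k l : ℂ) * w l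

/-- the complex-linear extension of the Hodge star -/
def hodgeC (w : LC6) : LC6 := ![w 5, -(w 4), w 3, w 2, -(w 1), w 0]

/-- membership in `Λ²₊ ⊗ ℂ` -/
def SelfDualC (w : LC6) : Prop := hodgeC w = w



/- ### the quadratic quantity Q(R) = R² + R^# and related notions -/

/-- product of endomorphisms of Λ²ℝ⁴ (matrix product) -/
def mm (A B : M6) : M6 := fun k l => ∑ j, A k j * B j l

/-- the antisymmetric array of coefficients of a 2-form: `ext2 w a b = w_{ab}` -/
def ext2 (w : L6) (a b : Fin 4) : ℝ :=
  ∑ k, w k * ((if (pr k).1 = a ∧ (pr k).2 = b then (1:ℝ) else 0)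
    - (if (pr k).1 = b ∧ (pr k).2 = a then (1:ℝ) else 0))

/-- the skew-symmetric matrix `φ(w)` associated to a 2-form `w` under the
identification `x∧y ↦ (u ↦ ⟨x,u⟩y − ⟨y,u⟩x)` of `Λ²ℝ⁴` with `𝔰𝔬(4)` -/
def toSkew (w : L6) : Fin 4 → Fin 4 → ℝ := fun a b => ext2 w b a

/-- the Lie bracket on Λ²ℝ⁴ obtained by transporting the commutator of
matrices through the identification `Λ²ℝ⁴ ≃ 𝔰𝔬(4)` above -/
def bracket (u v : L6) : L6 :=
  fun k => ∑ c, (toSkew u (pr k).2 c * toSkew v c (pr k).1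
    - toSkew v (pr k).2 c * toSkew u c (pr k).1)

/-- the standard (orthonormal) basis of Λ²ℝ⁴ -/
def std6 (k : Fin 6) : L6 := fun l => if l = k then 1 else 0

/-- the quadratic form of `R^#` :
`η ↦ −(1/2) Σᵢ ⟨[η, R([η, Rωᵢ])], ωᵢ⟩` for the orthonormal basis `(ωᵢ)` of Λ²ℝ⁴. -/
def sharpQ (A : M6) (η : L6) : ℝ :=
  -(1/2 : ℝ) * ∑ i, ip6 (bracket η (appM A (bracket η (appM A (std6 i))))) (std6 i)

/-- `R^#`, the symmetric endomorphism of Λ²ℝ⁴ determined by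
`⟨R^#η, η⟩ = sharpQ R η` (obtained by polarization). -/
def sharp (A : M6) : M6 :=
  fun k l => (sharpQ A (std6 k + std6 l) - sharpQ A (std6 k) - sharpQ A (std6 l)) / 2

/-- `Q(R) = R² + R^#` -/
def Qop (A : M6) : M6 := mm A A + sharp A

/-- the identity endomorphism of Λ²ℝ⁴ -/
def idM6 : M6 := fun k l => if k = l then 1 else 0

/-- the Ricci endomorphism `ρ(R)` of a curvature operator, as a matrix:
`⟨ρ(R)x, y⟩ = Σᵢ ⟨R(x∧eᵢ), y∧eᵢ⟩`. -/
def ricci (A : M6) : Fin 4 → Fin 4 → ℝ :=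
  fun a b => ∑ i, ip6 (appM A (wedge (std4 a) (std4 i))) (wedge (std4 b) (std4 i))

/-- An oriented curvature cone: a closed convex cone in `S²_BΛ²ℝ⁴` which is
invariant under the `SO(4)`-action `⟨(g·R)(x∧y), z∧t⟩ = ⟨R(gx∧gy), gz∧gt⟩`
(expressed below by the characterizing property of `B = g·A`) and contains
the identity in its interior relative to `S²_BΛ²ℝ⁴`. -/
structure OrientedCurvatureCone where
  /-- the underlying set of algebraic curvature operators -/
  carrier : Set M6
  subset_curvOp : ∀ A ∈ carrier, IsCurvOp A
  closed : IsClosed carrier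
  convex : Convex ℝ carrier
  cone : ∀ (t : ℝ), 0 ≤ t → ∀ A ∈ carrier, t • A ∈ carrier
  so4_invariant : ∀ (g : Matrix (Fin 4) (Fin 4) ℝ),
    (∀ x y : V4, ip4 (g.mulVec x) (g.mulVec y) = ip4 x y) → g.det = 1 →
    ∀ A ∈ carrier, ∀ B : M6,
      (∀ x y z t : V4, ip6 (appM B (wedge x y)) (wedge z t)
        = ip6 (appM A (wedge (g.mulVec x) (g.mulVec y)))
            (wedge (g.mulVec z) (g.mulVec t))) →
      B ∈ carrier
  id_mem_interior : ∃ ε : ℝ, 0 < ε ∧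
    ∀ A : M6, IsCurvOp A → dist A idM6 < ε → A ∈ carrier


/-!
Since `⟨R^#η, η⟩ = -½ tr((ad_η R)²)`, replacing `R` by `R - κ Id` adds
`κ tr(R ad_η²) - ½ κ² tr(ad_η²)` to it. With `N = φ(η)`, the operator `ad_η²` sends `x ∧ y` to
`N²x ∧ y + 2 Nx ∧ Ny + x ∧ N²y`. In the trace against `R`, the outer two terms contract `R` to its
Ricci endomorphism, and the Bianchi identity evaluates the middle one as `2 ⟨Rη, η⟩`. Hence
`tr(R ad_η²) = 2 ⟨Rη, η⟩ - ⟨D η, η⟩`, where `D` is the derivation of `Λ²ℝ⁴` induced by `ρ(R)`, and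
the case `R = Id` gives `tr(ad_η²) = -4 |η|²`. The terms `2κR` cancel against those of
`(R - κ Id)²`, leaving `Q(R - κ Id) = Q(R) - κ D + 3κ² Id`; for `ρ(R) = 3 id` one has `D = 6 Id`.
-/

open Matrix

theorem sum_mulVec_single_dotProduct_mulVec_single {n m R : Type*} [Fintype n] [DecidableEq n]
    [Fintype m] [CommSemiring R] (S T : Matrix m n R) :
    ∑ i, (S *ᵥ Pi.single i 1) ⬝ᵥ (T *ᵥ Pi.single i 1) = trace (Sᵀ * T) := by
  simp only [mulVec_single_one, trace, diag_apply, mul_apply', dotProduct, transpose_apply,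
    col_apply]

theorem sum_apply_mulVec_single {n R M : Type*} [Fintype n] [DecidableEq n] [CommSemiring R]
    [AddCommMonoid M] [Module R M] (B : (n → R) →ₗ[R] (n → R) →ₗ[R] M) (T : Matrix n n R) :
    ∑ i, B (T *ᵥ Pi.single i 1) (Pi.single i 1) = ∑ i, B (Pi.single i 1) (Tᵀ *ᵥ Pi.single i 1) := by
  have expand (S : Matrix n n R) (j : n) :
      S *ᵥ Pi.single j 1 = ∑ i, S i j • Pi.single i (1 : R) := by
    ext k
    simp [Finset.sum_apply, Pi.single_apply]
  simp only [expand, map_sum, map_smul, LinearMap.sum_apply, LinearMap.smul_apply, transpose_apply]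
  exact Finset.sum_comm

theorem std4_eq_single (i : Fin 4) : std4 i = Pi.single i 1 := by
  ext j
  simp [std4, Pi.single_apply]

theorem std6_eq_single (k : Fin 6) : std6 k = Pi.single k 1 := by
  ext l
  simp [std6, Pi.single_apply]

theorem std6_eq_wedge (k : Fin 6) : std6 k = wedge (std4 (pr k).1) (std4 (pr k).2) := by
  ext l
  fin_cases k <;> fin_cases l <;> simp [std6, wedge, std4, pr]

theorem ip6_eq_dotProduct (u v : L6) : ip6 u v = u ⬝ᵥ v := rfl

theorem appM_eq_mulVec (A : M6) (w : L6) : appM A w = of A *ᵥ w := rfl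

theorem of_idM6 : of idM6 = 1 := by
  ext k l
  simp [idM6, one_apply]

theorem of_sub_smul_idM6 (A : M6) (κ : ℝ) : of (A - κ • idM6) = of A - κ • 1 := by
  rw [← of_idM6]
  rfl

theorem of_mm (A B : M6) : of (mm A B) = of A * of B := rfl

theorem appM_appM (A B : M6) (w : L6) : appM A (appM B w) = appM (mm A B) w :=
  mulVec_mulVec w (of A) (of B)

theorem ip6_appM_std6 (A : M6) (k l : Fin 6) : ip6 (appM A (std6 l)) (std6 k) = A k l := by
  simp [ip6_eq_dotProduct, appM_eq_mulVec, std6_eq_single]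

theorem isSymm6_iff {A : M6} : IsSymm6 A ↔ (of A).IsSymm := by
  constructor
  · intro h
    refine IsSymm.ext fun k l ↦ ?_
    simpa [ip6_eq_dotProduct, appM_eq_mulVec, std6_eq_single] using h (std6 k) (std6 l)
  · intro h u v
    rw [ip6_eq_dotProduct, ip6_eq_dotProduct, appM_eq_mulVec, appM_eq_mulVec, dotProduct_mulVec,
      ← mulVec_transpose, h.eq]

/-- The wedge product `wedge` bundled as a bilinear map. -/
def wedgeₗ : V4 →ₗ[ℝ] V4 →ₗ[ℝ] L6 :=
  LinearMap.mk₂ ℝ wedge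
    (fun _ _ _ ↦ by ext; simp only [wedge, Pi.add_apply]; ring)
    (fun _ _ _ ↦ by ext; simp only [wedge, Pi.smul_apply, smul_eq_mul]; ring)
    (fun _ _ _ ↦ by ext; simp only [wedge, Pi.add_apply]; ring)
    (fun _ _ _ ↦ by ext; simp only [wedge, Pi.smul_apply, smul_eq_mul]; ring)

theorem wedgeₗ_apply (x y : V4) : wedgeₗ x y = wedge x y := rfl

theorem wedge_swap (x y : V4) : wedge y x = -wedge x y := by
  ext k
  simp only [wedge, Pi.neg_apply]
  ring

/-- The identification `Λ²ℝ⁴ → 𝔰𝔬(4)` given by `toSkew`, as a linear map into `Matrix`, so that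
matrix algebra applies to its values. -/
def skewMatrix : L6 →ₗ[ℝ] Matrix (Fin 4) (Fin 4) ℝ where
  toFun w := of (toSkew w)
  map_add' u v := by
    ext a b
    simp [toSkew, ext2, add_mul, Finset.sum_add_distrib]
  map_smul' c u := by
    ext a b
    simp [toSkew, ext2, Finset.mul_sum, mul_assoc]

theorem transpose_skewMatrix (w : L6) : (skewMatrix w)ᵀ = -skewMatrix w := by
  ext a b
  change toSkew w b a = -toSkew w a b
  simp only [toSkew, ext2, ← Finset.sum_neg_distrib, ← mul_neg, neg_sub]

theorem skewMatrix_eq (w : L6) : skewMatrix w =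
    !![0, -w 0, -w 1, -w 2; w 0, 0, -w 3, -w 4; w 1, w 3, 0, -w 5; w 2, w 4, w 5, 0] := by
  ext a b
  fin_cases a <;> fin_cases b <;>
    simp [skewMatrix, toSkew, ext2, pr, Fin.sum_univ_six]

theorem ip6_wedge (x y : V4) (w : L6) : ip6 (wedge x y) w = (skewMatrix w *ᵥ x) ⬝ᵥ y := by
  simp only [ip6, wedge, pr, skewMatrix_eq, mulVec, dotProduct, of_apply, Fin.sum_univ_six,
    Fin.sum_univ_four, cons_val]
  ring

theorem skewMatrix_wedge (x y : V4) : skewMatrix (wedge x y) = vecMulVec y x - vecMulVec x y := by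
  rw [skewMatrix_eq]
  ext a b
  fin_cases a <;> fin_cases b <;> simp [wedge, pr, vecMulVec_apply] <;> ring

theorem ip6_wedge_wedge (x y z t : V4) :
    ip6 (wedge x y) (wedge z t) = (x ⬝ᵥ z) * (y ⬝ᵥ t) - (x ⬝ᵥ t) * (y ⬝ᵥ z) := by
  rw [ip6_wedge, skewMatrix_wedge, dotProduct_comm x z, dotProduct_comm y t, dotProduct_comm x t,
    dotProduct_comm y z]
  simp only [sub_mulVec, sub_dotProduct, vecMulVec_mulVec, op_smul_eq_smul, smul_dotProduct,
    smul_eq_mul]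

theorem sum_wedge_skewMatrix_mulVec (w : L6) :
    ∑ a, wedge (std4 a) (skewMatrix w *ᵥ std4 a) = (2 : ℝ) • w := by
  rw [skewMatrix_eq]
  ext k
  fin_cases k <;>
    simp [wedge, pr, std4_eq_single, Fin.sum_univ_four] <;> ring

theorem sum_wedge_skewMatrix_mulVec_left (w : L6) :
    ∑ a, wedge (skewMatrix w *ᵥ std4 a) (std4 a) = (-2 : ℝ) • w := by
  simp only [wedge_swap (std4 _), Finset.sum_neg_distrib, sum_wedge_skewMatrix_mulVec, neg_smul]

theorem sum_apply_wedge_std4 (B : L6 →ₗ[ℝ] L6 →ₗ[ℝ] ℝ) :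
    ∑ a, ∑ b, B (wedge (std4 a) (std4 b)) (wedge (std4 a) (std4 b))
      = 2 * ∑ k, B (std6 k) (std6 k) := by
  have wedge_self (x : V4) : wedge x x = 0 := by
    ext k
    simp only [wedge, Pi.zero_apply]
    ring
  simp only [std6_eq_wedge, Fin.sum_univ_four, Fin.sum_univ_six, wedge_self, map_zero,
    wedge_swap (std4 0) (std4 1), wedge_swap (std4 0) (std4 2), wedge_swap (std4 0) (std4 3),
    wedge_swap (std4 1) (std4 2), wedge_swap (std4 1) (std4 3), wedge_swap (std4 2) (std4 3),
    map_neg, LinearMap.neg_apply, neg_neg]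
  simp only [pr, cons_val, zero_add, add_zero]
  ring

/-- The extension `x ∧ y ↦ Tx ∧ y + x ∧ Ty` of `T : ℝ⁴ → ℝ⁴` to a derivation of `Λ²ℝ⁴`, called
`2 T ∧ id` in the literature on the Ricci flow.  Column `l` is the image of the basis vector
`std6 l`.  For `T = φ(η)` it is `ad_η`, and for `T = ρ(R)` it is the
coefficient of `-κ` in `Q(R - κ Id)`. -/
def wedgeDerivation (T : Matrix (Fin 4) (Fin 4) ℝ) : M6 := fun k l ↦
  (wedge (T *ᵥ std4 (pr l).1) (std4 (pr l).2) + wedge (std4 (pr l).1) (T *ᵥ std4 (pr l).2)) k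

theorem appM_wedgeDerivation_wedge (T : Matrix (Fin 4) (Fin 4) ℝ) (x y : V4) :
    appM (wedgeDerivation T) (wedge x y) = wedge (T *ᵥ x) y + wedge x (T *ᵥ y) := by
  ext k
  simp only [appM, wedgeDerivation, wedge, std4_eq_single, mulVec_single_one, col_apply, mulVec,
    dotProduct, Pi.add_apply, Fin.sum_univ_six, Fin.sum_univ_four]
  fin_cases k <;> simp [pr] <;> ring

theorem bracket_eq_wedgeDerivation (u v : L6) :
    bracket u v = appM (wedgeDerivation (skewMatrix u)) v := by
  ext k
  change ∑ c, (skewMatrix u (pr k).2 c * skewMatrix v c (pr k).1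
    - skewMatrix v (pr k).2 c * skewMatrix u c (pr k).1) = _
  simp only [appM, wedgeDerivation, wedge, std4_eq_single, mulVec_single_one, col_apply,
    skewMatrix_eq, Pi.add_apply, Fin.sum_univ_six, Fin.sum_univ_four]
  fin_cases k <;> simp [pr] <;> ring

theorem isSymm6_wedgeDerivation {T : Matrix (Fin 4) (Fin 4) ℝ} (hT : T.IsSymm) :
    IsSymm6 (wedgeDerivation T) := by
  refine isSymm6_iff.2 (IsSymm.ext fun k l ↦ ?_)
  simp only [of_apply, ← ip6_appM_std6 (wedgeDerivation T)]
  simp only [std6_eq_wedge, appM_wedgeDerivation_wedge, ip6_eq_dotProduct, add_dotProduct]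
  simp only [← ip6_eq_dotProduct, ip6_wedge_wedge, std4_eq_single, mulVec_single_one,
    dotProduct_single_one, col_apply, hT.apply]
  simp only [Pi.single_apply, eq_comm]
  ring

theorem sharpQ_eq_trace (A : M6) (η : L6) :
    sharpQ A η = -(1 / 2) * trace ((of (wedgeDerivation (skewMatrix η)) * of A) ^ 2) := by
  rw [sq, Matrix.mul_assoc]
  simp only [sharpQ, bracket_eq_wedgeDerivation, appM_appM, ip6_appM_std6]
  rfl

theorem sharpQ_sub_smul_idM6 (A : M6) (κ : ℝ) (η : L6) :
    sharpQ (A - κ • idM6) η = sharpQ A η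
      + κ * trace (of A * of (wedgeDerivation (skewMatrix η)) ^ 2)
      - κ ^ 2 / 2 * trace (of (wedgeDerivation (skewMatrix η)) ^ 2) := by
  rw [sharpQ_eq_trace, sharpQ_eq_trace, of_sub_smul_idM6]
  generalize of (wedgeDerivation (skewMatrix η)) = D
  have expand : (D * (of A - κ • 1)) ^ 2
      = (D * of A) ^ 2 - κ • (D * of A * D + D * (D * of A)) + κ ^ 2 • D ^ 2 := by
    simp only [sq, Matrix.mul_sub, Matrix.sub_mul, Matrix.mul_smul, Matrix.smul_mul,
      Matrix.mul_one, smul_add, smul_smul, smul_sub]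
    abel
  have cycle : trace (D * of A * D) = trace (of A * D ^ 2) := by
    rw [trace_mul_cycle, trace_mul_comm, sq]
  have cycle' : trace (D * (D * of A)) = trace (of A * D ^ 2) := by
    rw [← Matrix.mul_assoc, trace_mul_comm, sq]
  simp only [expand, trace_add, trace_sub, trace_smul, smul_eq_mul, cycle, cycle']
  ring

/-- The bilinear form `(u, v) ↦ ⟨Au, v⟩` on `Λ²ℝ⁴`, depending linearly on `A`. -/
def curvForm : M6 →ₗ[ℝ] L6 →ₗ[ℝ] L6 →ₗ[ℝ] ℝ where
  toFun A := dotProductBilin ℝ ℝ ∘ₗ (of A).mulVecLin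
  map_add' A B := by
    rw [← of_add_of, mulVecLin_add, LinearMap.comp_add]
  map_smul' c A := by
    ext u v
    simp [← smul_of]

theorem curvForm_apply (A : M6) (u v : L6) : curvForm A u v = ip6 (appM A u) v := rfl

theorem sum_curvForm_wedge_std4 (A : M6) (x y : V4) :
    ∑ b, curvForm A (wedge x (std4 b)) (wedge y (std4 b)) = x ⬝ᵥ (of (ricci A) *ᵥ y) := by
  have ricci_form : ∑ b, (curvForm A).compl₁₂ (wedgeₗ.flip (std4 b)) (wedgeₗ.flip (std4 b))
      = Matrix.toLinearMap₂' ℝ (of (ricci A)) := by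
    refine (Pi.basisFun ℝ (Fin 4)).ext fun i ↦ (Pi.basisFun ℝ (Fin 4)).ext fun j ↦ ?_
    simp only [Pi.basisFun_apply, ← std4_eq_single, LinearMap.sum_apply,
      LinearMap.compl₁₂_apply, LinearMap.flip_apply, wedgeₗ_apply, curvForm_apply,
      toLinearMap₂'_apply']
    simp [std4_eq_single, ricci]
  simpa [LinearMap.sum_apply, toLinearMap₂'_apply', wedgeₗ_apply] using
    LinearMap.congr_fun₂ ricci_form x y

theorem sum_curvForm_wedge_mulVec_std4 (A : M6) (S : Matrix (Fin 4) (Fin 4) ℝ) :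
    ∑ a, ∑ b, curvForm A (wedge (S *ᵥ std4 a) (std4 b)) (wedge (std4 a) (std4 b))
      = trace (Sᵀ * of (ricci A)) := by
  simp only [sum_curvForm_wedge_std4]
  simp only [std4_eq_single, sum_mulVec_single_dotProduct_mulVec_single]

theorem sum_curvForm_wedge_skewMatrix_diag (A : M6) (η : L6) :
    ∑ a, ∑ b, curvForm A (wedge (std4 a) (skewMatrix η *ᵥ std4 a))
      (wedge (skewMatrix η *ᵥ std4 b) (std4 b)) = -4 * curvForm A η η := by
  calc
    _ = curvForm A (∑ a, wedge (std4 a) (skewMatrix η *ᵥ std4 a))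
          (∑ b, wedge (skewMatrix η *ᵥ std4 b) (std4 b)) := by
        simp only [map_sum, LinearMap.sum_apply]
        exact Finset.sum_comm
    _ = -4 * curvForm A η η := by
        rw [sum_wedge_skewMatrix_mulVec, sum_wedge_skewMatrix_mulVec_left, map_smul, map_smul,
          LinearMap.smul_apply, smul_eq_mul, smul_eq_mul]
        ring

theorem sum_curvForm_wedge_transfer_skewMatrix (A : M6) (η : L6) (x y : V4) :
    ∑ a, curvForm A (wedge x (std4 a)) (wedge (skewMatrix η *ᵥ std4 a) y)
      = ∑ a, curvForm A (wedge (skewMatrix η *ᵥ std4 a) x) (wedge (std4 a) y) := by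
  have transfer :=
    sum_apply_mulVec_single ((curvForm A).compl₁₂ (wedgeₗ x) (wedgeₗ.flip y)) (skewMatrix η)
  simp only [transpose_skewMatrix, neg_mulVec, map_neg, LinearMap.compl₁₂_apply,
    LinearMap.flip_apply, wedgeₗ_apply, ← std4_eq_single, Finset.sum_neg_distrib] at transfer
  rw [← neg_eq_iff_eq_neg.2 transfer, ← Finset.sum_neg_distrib]
  refine Finset.sum_congr rfl fun a _ ↦ ?_
  rw [wedge_swap (skewMatrix η *ᵥ std4 a), map_neg, LinearMap.neg_apply, neg_neg]

-- Apply Bianchi to `N eₐ, N e_b, eₐ, e_b` and sum: as `N` is skew, the third term has the same sum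
-- as the first, and the second factors through `∑ eₐ ∧ N eₐ = 2 η`.
theorem sum_curvForm_wedge_skewMatrix {A : M6} (hA : Bianchi A) (η : L6) :
    ∑ a, ∑ b, curvForm A (wedge (skewMatrix η *ᵥ std4 a) (skewMatrix η *ᵥ std4 b))
      (wedge (std4 a) (std4 b)) = 2 * curvForm A η η := by
  set N := skewMatrix η
  have bianchi (a b : Fin 4) :
      curvForm A (wedge (N *ᵥ std4 a) (N *ᵥ std4 b)) (wedge (std4 a) (std4 b))
        + curvForm A (wedge (std4 a) (N *ᵥ std4 a)) (wedge (N *ᵥ std4 b) (std4 b))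
        + curvForm A (wedge (N *ᵥ std4 b) (std4 a)) (wedge (N *ᵥ std4 a) (std4 b)) = 0 :=
    hA _ _ _ _
  have third_term_eq_first :
      ∑ a, ∑ b, curvForm A (wedge (N *ᵥ std4 b) (std4 a)) (wedge (N *ᵥ std4 a) (std4 b))
        = ∑ a, ∑ b, curvForm A (wedge (N *ᵥ std4 a) (N *ᵥ std4 b)) (wedge (std4 a) (std4 b)) := by
    refine Finset.sum_comm.trans (.trans (Finset.sum_congr rfl fun b _ ↦ ?_) Finset.sum_comm)
    exact sum_curvForm_wedge_transfer_skewMatrix A η (N *ᵥ std4 b) (std4 b)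
  have sum_bianchi := Finset.sum_eq_zero fun a (_ : a ∈ Finset.univ) ↦
    Finset.sum_eq_zero fun b (_ : b ∈ Finset.univ) ↦ bianchi a b
  simp only [Finset.sum_add_distrib, third_term_eq_first] at sum_bianchi
  linarith [sum_curvForm_wedge_skewMatrix_diag A η]

theorem curvForm_wedgeDerivation (T : Matrix (Fin 4) (Fin 4) ℝ) (η : L6) :
    curvForm (wedgeDerivation T) η η = -trace (T * skewMatrix η ^ 2) := by
  set N := skewMatrix η with hN
  have h : 2 * curvForm (wedgeDerivation T) η η = -2 * trace (T * N ^ 2) := by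
    calc 2 * curvForm (wedgeDerivation T) η η
        = ∑ a, curvForm (wedgeDerivation T) (wedge (std4 a) (N *ᵥ std4 a)) η := by
          rw [← LinearMap.sum_apply, ← map_sum, sum_wedge_skewMatrix_mulVec, map_smul,
            LinearMap.smul_apply, smul_eq_mul]
      _ = ∑ a, ((N *ᵥ std4 a) ⬝ᵥ ((N * T) *ᵥ std4 a) + (N *ᵥ std4 a) ⬝ᵥ ((T * N) *ᵥ std4 a)) := by
          refine Finset.sum_congr rfl fun a _ ↦ ?_
          rw [curvForm_apply, appM_wedgeDerivation_wedge, ip6_eq_dotProduct, add_dotProduct,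
            ← ip6_eq_dotProduct, ← ip6_eq_dotProduct, ip6_wedge, ip6_wedge, mulVec_mulVec,
            mulVec_mulVec, dotProduct_comm]
      _ = trace (Nᵀ * (N * T)) + trace (Nᵀ * (T * N)) := by
          simp only [std4_eq_single, Finset.sum_add_distrib,
            sum_mulVec_single_dotProduct_mulVec_single]
      _ = -2 * trace (T * N ^ 2) := by
          rw [hN, transpose_skewMatrix, ← hN, neg_mul, neg_mul, trace_neg, trace_neg,
            trace_mul_comm N (T * N), ← Matrix.mul_assoc, trace_mul_comm _ T, Matrix.mul_assoc, sq]
          ring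
  linarith

theorem appM_wedgeDerivation_appM_wedgeDerivation_wedge (T : Matrix (Fin 4) (Fin 4) ℝ) (x y : V4) :
    appM (wedgeDerivation T) (appM (wedgeDerivation T) (wedge x y))
      = wedge (T ^ 2 *ᵥ x) y + (2 : ℝ) • wedge (T *ᵥ x) (T *ᵥ y) + wedge x (T ^ 2 *ᵥ y) := by
  rw [appM_wedgeDerivation_wedge, appM_eq_mulVec, mulVec_add, ← appM_eq_mulVec, ← appM_eq_mulVec,
    appM_wedgeDerivation_wedge, appM_wedgeDerivation_wedge, sq, ← mulVec_mulVec, ← mulVec_mulVec,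
    two_smul]
  abel

theorem trace_mul_wedgeDerivation_skewMatrix_sq {A : M6} (hA : Bianchi A) (η : L6) :
    trace (of A * of (wedgeDerivation (skewMatrix η)) ^ 2)
      = 2 * curvForm A η η - curvForm (wedgeDerivation (of (ricci A))) η η := by
  set N := skewMatrix η with hN
  have trace_eq : 2 * trace (of A * of (wedgeDerivation N) ^ 2)
      = ∑ a, ∑ b, curvForm A (appM (wedgeDerivation N) (appM (wedgeDerivation N)
          (wedge (std4 a) (std4 b)))) (wedge (std4 a) (std4 b)) := by
    have := sum_apply_wedge_std4 (curvForm (mm A (mm (wedgeDerivation N) (wedgeDerivation N))))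
    simp only [curvForm_apply, ip6_appM_std6] at this
    simp only [curvForm_apply, appM_appM, this, sq]
    rfl
  have left : ∑ a, ∑ b, curvForm A (wedge (N ^ 2 *ᵥ std4 a) (std4 b)) (wedge (std4 a) (std4 b))
      = trace (of (ricci A) * N ^ 2) := by
    rw [sum_curvForm_wedge_mulVec_std4, transpose_pow, hN, transpose_skewMatrix, neg_sq,
      trace_mul_comm]
  have right : ∑ a, ∑ b, curvForm A (wedge (std4 a) (N ^ 2 *ᵥ std4 b)) (wedge (std4 a) (std4 b))
      = trace (of (ricci A) * N ^ 2) := by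
    rw [← left, Finset.sum_comm]
    simp only [wedge_swap (N ^ 2 *ᵥ std4 _) (std4 _)]
    refine Finset.sum_congr rfl fun a _ ↦ Finset.sum_congr rfl fun b _ ↦ ?_
    rw [wedge_swap (std4 a) (std4 b)]
    simp only [map_neg, LinearMap.neg_apply, neg_neg]
  have middle : ∑ a, ∑ b, curvForm A (wedge (N *ᵥ std4 a) (N *ᵥ std4 b)) (wedge (std4 a) (std4 b))
      = 2 * curvForm A η η := sum_curvForm_wedge_skewMatrix hA η
  simp only [appM_wedgeDerivation_appM_wedgeDerivation_wedge, map_add, LinearMap.add_apply,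
    map_smul, LinearMap.smul_apply, smul_eq_mul, Finset.sum_add_distrib, ← Finset.mul_sum, left,
    middle, right] at trace_eq
  rw [curvForm_wedgeDerivation]
  linarith

theorem bianchi_idM6 : Bianchi idM6 := by
  intro x y z t
  simp only [appM_eq_mulVec, of_idM6, one_mulVec, ip6_wedge_wedge, dotProduct_comm]
  ring

theorem isCurvOp_idM6 : IsCurvOp idM6 :=
  ⟨isSymm6_iff.2 (of_idM6 ▸ isSymm_one), bianchi_idM6⟩

theorem ricci_idM6 : of (ricci idM6) = (3 : ℝ) • 1 := by
  ext a b
  simp only [of_apply, ricci, appM_eq_mulVec, of_idM6, one_mulVec, ip6_wedge_wedge,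
    std4_eq_single, dotProduct_single_one, Matrix.smul_apply, one_apply, Pi.single_apply]
  rcases eq_or_ne a b with rfl | h
  · norm_num
  · simp [h, h.symm]

theorem wedgeDerivation_smul_one (c : ℝ) : wedgeDerivation (c • 1) = (2 * c) • idM6 := by
  ext k l
  simp only [wedgeDerivation, smul_mulVec, one_mulVec]
  simp only [← wedgeₗ_apply, map_smul, LinearMap.smul_apply]
  simp only [wedgeₗ_apply, ← std6_eq_wedge]
  change c * std6 l k + c * std6 l k = 2 * c * std6 l k
  ring

theorem trace_wedgeDerivation_skewMatrix_sq (η : L6) :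
    trace (of (wedgeDerivation (skewMatrix η)) ^ 2) = -4 * curvForm idM6 η η := by
  have h := trace_mul_wedgeDerivation_skewMatrix_sq bianchi_idM6 η
  have einstein : curvForm (wedgeDerivation (of (ricci idM6))) η η = 6 * curvForm idM6 η η := by
    rw [ricci_idM6, wedgeDerivation_smul_one, map_smul]
    norm_num
  rw [of_idM6, Matrix.one_mul, einstein] at h
  linarith

theorem isSymm_ricci {A : M6} (hA : IsSymm6 A) : (of (ricci A)).IsSymm := by
  refine IsSymm.ext fun a b ↦ ?_
  simp only [of_apply, ricci]
  refine Finset.sum_congr rfl fun i _ ↦ ?_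
  rw [hA, ip6_eq_dotProduct, dotProduct_comm, ip6_eq_dotProduct]

theorem sharp_eq_add {A B M : M6} (hM : IsSymm6 M)
    (h : ∀ η, sharpQ B η = sharpQ A η + curvForm M η η) : sharp B = sharp A + M := by
  ext k l
  have symm : M l k = M k l := (isSymm6_iff.1 hM).apply k l
  simp only [sharp, h, map_add, LinearMap.add_apply, Pi.add_apply]
  simp only [curvForm_apply, ip6_appM_std6]
  linarith

theorem sharp_sub_smul_idM6 {A : M6} (hA : IsCurvOp A) (κ : ℝ) :
    sharp (A - κ • idM6) = sharp A
      + (κ • ((2 : ℝ) • A - wedgeDerivation (of (ricci A))) + (2 * κ ^ 2) • idM6) := by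
  refine sharp_eq_add (isSymm6_iff.2 ?_) fun η ↦ ?_
  · simp only [← of_add_of, ← of_sub_of, ← smul_of, of_idM6]
    exact ((((isSymm6_iff.1 hA.1).smul _).sub (isSymm6_iff.1 (isSymm6_wedgeDerivation
      (isSymm_ricci hA.1)))).smul _).add (isSymm_one.smul _)
  · rw [sharpQ_sub_smul_idM6, trace_mul_wedgeDerivation_skewMatrix_sq hA.2,
      trace_wedgeDerivation_skewMatrix_sq]
    simp only [map_add, map_sub, map_smul, LinearMap.add_apply, LinearMap.sub_apply,
      LinearMap.smul_apply, smul_eq_mul]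
    ring

theorem mm_sub_smul_idM6 (A : M6) (κ : ℝ) :
    mm (A - κ • idM6) (A - κ • idM6) = mm A A - (2 * κ) • A + κ ^ 2 • idM6 := by
  apply of.injective
  rw [of_mm, of_sub_smul_idM6, ← of_add_of, ← of_sub_of, of_mm, ← smul_of, ← smul_of, of_idM6]
  simp only [Matrix.mul_sub, Matrix.sub_mul, Matrix.mul_smul, Matrix.smul_mul, Matrix.mul_one,
    Matrix.one_mul]
  module

theorem Qop_sub_smul_idM6 {A : M6} (hA : IsCurvOp A) (κ : ℝ) :
    Qop (A - κ • idM6) = Qop A - κ • wedgeDerivation (of (ricci A)) + (3 * κ ^ 2) • idM6 := by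
  rw [Qop, Qop, mm_sub_smul_idM6, sharp_sub_smul_idM6 hA]
  module

theorem Qop_zero : Qop 0 = 0 := by
  have sharpQ_zero (η : L6) : sharpQ 0 η = 0 := by
    rw [sharpQ_eq_trace, of_zero, Matrix.mul_zero, zero_pow two_ne_zero, trace_zero, mul_zero]
  ext k l
  simp [Qop, mm, sharp, sharpQ_zero]

-- The shift formula at `R = Id`, `κ = 1` reads `0 = Q(Id) - 6 Id + 3 Id`.
theorem Qop_idM6 : Qop idM6 = (3 : ℝ) • idM6 := by
  have h := Qop_sub_smul_idM6 isCurvOp_idM6 1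
  rw [one_smul, sub_self, Qop_zero, ricci_idM6, wedgeDerivation_smul_one] at h
  linear_combination (norm := module) -h

theorem Qop_id_and_Qop_einstein_shift_general (A : M6) (hA : IsCurvOp A) :
    Qop idM6 = (3 : ℝ) • idM6 ∧ ∀ κ : ℝ, Qop (A - κ • idM6)
      = Qop A - κ • wedgeDerivation (of (ricci A)) + (3 * κ ^ 2) • idM6 :=
  ⟨Qop_idM6, Qop_sub_smul_idM6 hA⟩

/-- `Q(Id) = 3·Id`, and for an Einstein curvature operator with
`ρ(R) = 3·id` one has `Q(R − κ·Id) = Q(R) − 6κ·Id + 3κ²·Id`. -/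
theorem Qop_id_and_Qop_einstein_shift (A : M6) (hA : IsCurvOp A)
    (hEin : ∀ a b : Fin 4, ricci A a b = if a = b then 3 else 0) :
    Qop idM6 = (3 : ℝ) • idM6 ∧
    ∀ κ : ℝ, Qop (A - κ • idM6)
      = Qop A - (6 * κ) • idM6 + (3 * κ ^ 2) • idM6 := by
  have einstein : of (ricci A) = (3 : ℝ) • 1 := by
    ext a b
    simp [hEin, one_apply]
  obtain ⟨Qop_id, Qop_shift⟩ := Qop_id_and_Qop_einstein_shift_general A hA
  refine ⟨Qop_id, fun κ ↦ ?_⟩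
  rw [Qop_shift, einstein, wedgeDerivation_smul_one]
  module
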